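/- Let λ ∈ Λ_I⁺ and let β, γ ∈ Ψ_λ⁺ be such that sgn(s_βλ, s_γλ) ≠ 0. Then γ ∈ Φ_{β,1} and γ ∈ Φ_{β,2}. -/

import Mathlib

open scoped RealInnerProductSpace
open Classical

noncomputable section

namespace JantzenGVM

variable {V : Type*} [NormedAddCommGroup V] [InnerProductSpace ℝ V] [FiniteDimensional ℝ V]

/-- The coroot `α^∨ = 2α/⟨α,α⟩` of a vector `α` (junk value `0` when `α = 0`). -/
def coroot (α : V) : V := (2 / ⟪α, α⟫) • α

/-- The linear functional `v ↦ ⟨v, α^∨⟩`. -/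
def corootForm (α : V) : V →ₗ[ℝ] ℝ where
  toFun v := ⟪v, coroot α⟫
  map_add' x y := by simp [inner_add_left]
  map_smul' c x := by simp [inner_smul_left]

lemma corootForm_self {α : V} (h : ⟪α, α⟫ ≠ 0) : corootForm α α = 2 := by
  simp only [corootForm, coroot, LinearMap.coe_mk, AddHom.coe_mk, real_inner_smul_right]
  field_simp

/-- The reflection `s_α` as a linear automorphism of `V` (the identity when `⟨α,α⟩ = 0`). -/
def reflV (α : V) : V ≃ₗ[ℝ] V :=
  if h : ⟪α, α⟫ = 0 then LinearEquiv.refl ℝ V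
  else Module.reflection (corootForm_self h)

/-- `h* = ℂ ⊗ V`, realized as the space of real-linear functionals `V → ℂ` via the
inner product; an element `λ` pairs with a root `α` by `⟨λ, α⟩ = λ α` and with the
coroot by `⟨λ, α^∨⟩ = λ (coroot α)`. -/
abbrev HStar (V : Type*) [NormedAddCommGroup V] [InnerProductSpace ℝ V] := V →ₗ[ℝ] ℂ

/-- The canonical embedding of `V` into `h*`. -/
def emb (α : V) : HStar V where
  toFun v := (⟪α, v⟫ : ℂ)
  map_add' x y := by simp [inner_add_right]
  map_smul' c x := by simp [inner_smul_right, Complex.real_smul]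

/-- The action of a linear automorphism `w` of `V` on `h*`: `(w • λ)(v) = λ(w⁻¹ v)`. -/
def wAct (w : V ≃ₗ[ℝ] V) (l : HStar V) : HStar V := l ∘ₗ (w.symm : V →ₗ[ℝ] V)

/-- The reflection `s_β λ = λ - ⟨λ, β^∨⟩ β` acting on `h*`. -/
def sRefl (β : V) (l : HStar V) : HStar V := l - l (coroot β) • emb β

/-- The group generated by the reflections in the elements of `Φ'`. -/
def weyl (Φ' : Set V) : Subgroup (V ≃ₗ[ℝ] V) :=
  Subgroup.closure {w | ∃ α ∈ Φ', w = reflV α}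

/-- A finite, reduced, crystallographic root system spanning the Euclidean space `V`,
together with a choice of positive system and the corresponding simple system. -/
structure RootSys (V : Type*) [NormedAddCommGroup V] [InnerProductSpace ℝ V]
    [FiniteDimensional ℝ V] where
  Φ : Finset V
  pos : Finset V
  Δ : Finset V
  ne_zero : ∀ α ∈ Φ, α ≠ (0 : V)
  span_eq_top : Submodule.span ℝ (Φ : Set V) = ⊤
  reduced : ∀ α ∈ Φ, ∀ c : ℝ, c • α ∈ Φ → c = 1 ∨ c = -1
  refl_mem : ∀ α ∈ Φ, ∀ β ∈ Φ, reflV α β ∈ Φ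
  crystallographic : ∀ α ∈ Φ, ∀ β ∈ Φ, ∃ n : ℤ, ⟪β, coroot α⟫ = (n : ℝ)
  pos_subset : pos ⊆ Φ
  mem_pos_or : ∀ α ∈ Φ, α ∈ pos ∨ -α ∈ pos
  not_both : ∀ α ∈ pos, -α ∉ pos
  simple_subset : Δ ⊆ pos
  simple_indep : LinearIndependent ℝ (fun x : {a : V // a ∈ Δ} => x.1)
  simple_gen : ∀ β ∈ pos, ∃ c : V → ℝ, (∀ α ∈ Δ, 0 ≤ c α) ∧ β = ∑ α ∈ Δ, c α • α

/-- A subsystem of the root system: a subset of `Φ` closed under its own reflections. -/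
def IsSubsystem (S : RootSys V) (Φ' : Set V) : Prop :=
  Φ' ⊆ (S.Φ : Set V) ∧ ∀ α ∈ Φ', ∀ β ∈ Φ', reflV α β ∈ Φ'

/-- The length of `w`, i.e. the number of positive roots sent to negative roots
(this equals the Coxeter length for elements of the Weyl group). -/
def len (S : RootSys V) (w : V ≃ₗ[ℝ] V) : ℕ :=
  {β ∈ (S.pos : Set V) | w β ∉ (S.pos : Set V)}.ncard

/-- `Φ_I = ℤI ∩ Φ`, the subsystem generated by a subset `I` of the simple roots. -/
def PhiI (S : RootSys V) (I : Finset V) : Set V :=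
  {α ∈ (S.Φ : Set V) | α ∈ Submodule.span ℤ (I : Set V)}

/-- `z` is a positive integer. -/
def IsPosInt (z : ℂ) : Prop := ∃ n : ℤ, 0 < n ∧ z = (n : ℂ)

/-- `z` is an integer. -/
def IsInt (z : ℂ) : Prop := ∃ n : ℤ, z = (n : ℂ)

/-- `Λ_I⁺ = {λ ∈ h* : ⟨λ, α^∨⟩ ∈ ℤ_{>0} for all α ∈ I}`. -/
def LambdaP (I : Set V) : Set (HStar V) :=
  {l | ∀ α ∈ I, IsPosInt (l (coroot α))}

/-- `Λ⁺(Φ'', Φ') = {ν ∈ ℂΦ' : ⟨ν, α^∨⟩ ∈ ℤ_{>0} for all α ∈ Φ'' ∩ Φ⁺}`. -/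
def LambdaPSub (S : RootSys V) (Φ'' Φ' : Set V) : Set (HStar V) :=
  {l | l ∈ Submodule.span ℂ (emb '' Φ') ∧
       ∀ α ∈ Φ'' ∩ (S.pos : Set V), IsPosInt (l (coroot α))}

/-- `λ` is `Φ''`-regular: `⟨λ, α⟩ ≠ 0` for all `α ∈ Φ''`. -/
def IsRegularOn (Φ'' : Set V) (l : HStar V) : Prop := ∀ α ∈ Φ'', l α ≠ 0

/-- `Ψ⁺(λ, Φ'', Φ') = {β ∈ (Φ' ∩ Φ⁺) \ Φ'' : ⟨λ, β^∨⟩ ∈ ℤ_{>0}}`. -/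
def PsiP (S : RootSys V) (Φ'' Φ' : Set V) (l : HStar V) : Set V :=
  {β | β ∈ Φ' ∩ (S.pos : Set V) ∧ β ∉ Φ'' ∧ IsPosInt (l (coroot β))}

/-- `Ψ⁺⁺(λ, Φ'', Φ') = {β ∈ Ψ⁺(λ, Φ'', Φ') : s_β λ is Φ''-regular}`. -/
def PsiPP (S : RootSys V) (Φ'' Φ' : Set V) (l : HStar V) : Set V :=
  {β ∈ PsiP S Φ'' Φ' l | ∀ α ∈ Φ'', (sRefl β l) α ≠ 0}

/-- The sign function: `sgn(λ, μ) = (-1)^{ℓ(w)}` if `λ, μ` are `Φ''`-regular and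
`μ = wλ` for some `w ∈ W(Φ'')`, and `0` otherwise. -/
def sgnW (S : RootSys V) (Φ'' : Set V) (l m : HStar V) : ℤ :=
  if h : IsRegularOn Φ'' l ∧ IsRegularOn Φ'' m ∧ ∃ w, w ∈ weyl Φ'' ∧ m = wAct w l
  then (-1) ^ len S h.2.2.choose else 0

/-- The Jantzen coefficient `c(λ, μ, Φ'', Φ') = Σ_{β ∈ Ψ⁺⁺(λ,Φ'',Φ')} sgn(s_β λ, μ)`. -/
def jc (S : RootSys V) (Φ'' Φ' : Set V) (l m : HStar V) : ℤ :=
  ∑ᶠ β ∈ PsiPP S Φ'' Φ' l, sgnW S Φ'' (sRefl β l) m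

/-- The symmetrized Jantzen coefficient `c̃(λ, μ, Φ'', Φ')`. -/
def jcSym (S : RootSys V) (Φ'' Φ' : Set V) (l m : HStar V) : ℤ :=
  jc S Φ'' Φ' l m + jc S Φ'' Φ' m l

/-- `θ(λ) = Σ_{w ∈ W_I} (-1)^{ℓ(w)} e^{wλ}` in the free `ℤ`-module on `h*`. -/
def theta (S : RootSys V) (I : Finset V) (l : HStar V) : HStar V →₀ ℤ :=
  ∑ᶠ w ∈ (weyl (PhiI S I) : Set (V ≃ₗ[ℝ] V)),
    Finsupp.single (wAct w l) ((-1) ^ len S w)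

/-- `Φ_λ = {α ∈ Φ : ⟨λ, α⟩ = 0}`. -/
def singSet (S : RootSys V) (l : HStar V) : Set V :=
  {α ∈ (S.Φ : Set V) | l α = 0}

/-- `Φ_{[λ]} = {α ∈ Φ : ⟨λ, α^∨⟩ ∈ ℤ}`. -/
def integralSet (S : RootSys V) (l : HStar V) : Set V :=
  {α ∈ (S.Φ : Set V) | IsInt (l (coroot α))}

/-- `(ℚ A) ∩ Φ`, the intersection of the rational span of `A` with `Φ`.
Taking `A = Φ_I ∪ {β}` gives `Φ_{β,1}`; taking `A = Φ_λ ∪ {β}` gives `Φ_{β,2}`. -/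
def ratSpanRoots (S : RootSys V) (A : Set V) : Set V :=
  {γ ∈ (S.Φ : Set V) | ∃ (t : Finset V) (c : V → ℚ),
    (t : Set V) ⊆ A ∧ γ = ∑ α ∈ t, (c α : ℝ) • α}

/-- `Φ_{β,0}`, the irreducible component of `Φ` containing `β`. -/
def component (S : RootSys V) (β : V) : Set V :=
  {γ ∈ (S.Φ : Set V) |
    Relation.ReflTransGen
      (fun x y => x ∈ (S.Φ : Set V) ∧ y ∈ (S.Φ : Set V) ∧ ⟪x, y⟫ ≠ 0) β γ}

/-- `λ|_{Φ'}`: the unique element of `ℂΦ'` with `⟨λ|_{Φ'}, α^∨⟩ = ⟨λ, α^∨⟩`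
for all `α ∈ Φ'`. -/
def restrictW (Φ' : Set V) (l : HStar V) : HStar V :=
  letI : Nonempty (HStar V) := ⟨0⟩
  Classical.epsilon fun m =>
    m ∈ Submodule.span ℂ (emb '' Φ') ∧ ∀ α ∈ Φ', m (coroot α) = l (coroot α)

/-- `ᴵWᴶ = {w ∈ W : ℓ(uwv) = ℓ(u) + ℓ(w) + ℓ(v) for all u ∈ W_I, v ∈ W_J}`. -/
def doubleCoset (S : RootSys V) (I J : Finset V) : Set (V ≃ₗ[ℝ] V) :=
  {w | w ∈ weyl (S.Φ : Set V) ∧ ∀ u ∈ weyl (PhiI S I), ∀ v ∈ weyl (PhiI S J),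
    len S (u * w * v) = len S u + len S w + len S v}

/-- The fundamental weight `ϖ_j` relative to an enumeration `e` of the simple roots:
the unique element of `h*` with `⟨ϖ_j, α_k^∨⟩ = δ_{jk}`. -/
def fundWeight {n : ℕ} (e : Fin n → V) (j : Fin n) : HStar V :=
  letI : Nonempty (HStar V) := ⟨0⟩
  Classical.epsilon fun m => ∀ k : Fin n, m (coroot (e k)) = if k = j then 1 else 0

/-- The labels of the irreducible Dynkin types. -/
inductive LieType | A | B | C | D | E | F | G
deriving DecidableEq

/-- The Cartan matrix of type `A_n` (1-based indices): entry `(i,j)` is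
`⟨α_i, α_j^∨⟩`. -/
def cartanA (i j : ℕ) : ℤ :=
  if i = j then 2 else if i + 1 = j ∨ j + 1 = i then -1 else 0

/-- The Cartan matrices of the irreducible types in the standard (Bourbaki/Humphreys)
numbering of the Dynkin diagram: `cartanEntry t n i j = ⟨α_i, α_j^∨⟩` (1-based). -/
def cartanEntry : LieType → ℕ → ℕ → ℕ → ℤ
  | .A, _, i, j => cartanA i j
  | .B, n, i, j => if i + 1 = n ∧ j = n then -2 else cartanA i j
  | .C, n, i, j => if i = n ∧ j + 1 = n then -2 else cartanA i j
  | .D, n, i, j =>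
      if i = j then 2
      else if (i + 2 = n ∧ j = n) ∨ (i = n ∧ j + 2 = n) then -1
      else if (i + 1 = n ∧ j = n) ∨ (i = n ∧ j + 1 = n) then 0
      else cartanA i j
  | .E, _, i, j =>
      if i = j then 2
      else if (i = 1 ∧ j = 3) ∨ (i = 3 ∧ j = 1) ∨ (i = 2 ∧ j = 4) ∨ (i = 4 ∧ j = 2) then -1
      else if (i = 1 ∧ j = 2) ∨ (i = 2 ∧ j = 1) ∨ (i = 2 ∧ j = 3) ∨ (i = 3 ∧ j = 2) then 0
      else cartanA i j
  | .F, _, i, j => if i = 2 ∧ j = 3 then -2 else cartanA i j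
  | .G, _, i, j => if i = 2 ∧ j = 1 then -3 else cartanA i j

/-- The standard basis vector `e_k` (1-based index, junk `0` outside `1 ≤ k ≤ n`). -/
def stdE (n k : ℕ) : EuclideanSpace ℝ (Fin n) :=
  if h : 1 ≤ k ∧ k ≤ n then EuclideanSpace.single ⟨k - 1, by omega⟩ 1 else 0

/-- The labels `B`, `C`, `D` of the classical non-`A` types. -/
inductive BCD | B | C | D
deriving DecidableEq

/-- The root set of `B_n` / `C_n` / `D_n` in the standard realization. -/
def bcdRoots (t : BCD) (n : ℕ) : Set (EuclideanSpace ℝ (Fin n)) :=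
  {v | (∃ i j : ℕ, 1 ≤ i ∧ i < j ∧ j ≤ n ∧
          (v = stdE n i - stdE n j ∨ v = -(stdE n i - stdE n j) ∨
           v = stdE n i + stdE n j ∨ v = -(stdE n i + stdE n j))) ∨
       (match t with
        | .B => ∃ i : ℕ, 1 ≤ i ∧ i ≤ n ∧ (v = stdE n i ∨ v = -stdE n i)
        | .C => ∃ i : ℕ, 1 ≤ i ∧ i ≤ n ∧ (v = (2:ℝ) • stdE n i ∨ v = -((2:ℝ) • stdE n i))
        | .D => False)}

/-- The positive roots of `B_n` / `C_n` / `D_n` in the standard realization. -/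
def bcdPos (t : BCD) (n : ℕ) : Set (EuclideanSpace ℝ (Fin n)) :=
  {v | (∃ i j : ℕ, 1 ≤ i ∧ i < j ∧ j ≤ n ∧
          (v = stdE n i - stdE n j ∨ v = stdE n i + stdE n j)) ∨
       (match t with
        | .B => ∃ i : ℕ, 1 ≤ i ∧ i ≤ n ∧ v = stdE n i
        | .C => ∃ i : ℕ, 1 ≤ i ∧ i ≤ n ∧ v = (2:ℝ) • stdE n i
        | .D => False)}

/-- The simple roots of `B_n` / `C_n` / `D_n` in the standard realization. -/
def bcdSimple (t : BCD) (n : ℕ) : Set (EuclideanSpace ℝ (Fin n)) :=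
  {v | (∃ i : ℕ, 1 ≤ i ∧ i < n ∧ v = stdE n i - stdE n (i + 1)) ∨
       (match t with
        | .B => v = stdE n n
        | .C => v = (2:ℝ) • stdE n n
        | .D => v = stdE n (n - 1) + stdE n n)}

/-- The simple root `α_k` of `B_n` / `C_n` / `D_n` (1-based index `k`). -/
def bcdAlpha (t : BCD) (n k : ℕ) : EuclideanSpace ℝ (Fin n) :=
  if k < n then stdE n k - stdE n (k + 1)
  else match t with
  | .B => stdE n n
  | .C => (2:ℝ) • stdE n n
  | .D => stdE n (n - 1) + stdE n n


/-! ### Helper lemmas -/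

lemma reflV_apply' (α v : V) : reflV α v = v - ⟪v, coroot α⟫ • α := by
  unfold reflV
  split_ifs with h
  · have : α = 0 := inner_self_eq_zero.mp h
    subst this
    simp
  · rw [Module.reflection_apply]
    rfl

lemma coroot_inner (α v : V) : ⟪v, coroot α⟫ = 2 / ⟪α, α⟫ * ⟪v, α⟫ := by
  simp [coroot, real_inner_smul_right]

lemma inner_coroot_zero {α v : V} (h : ⟪v, α⟫ = 0) : ⟪v, coroot α⟫ = 0 := by
  rw [coroot_inner, h, mul_zero]

lemma inner_zero_of_coroot {α v : V} (h : ⟪v, coroot α⟫ = 0) : ⟪v, α⟫ = 0 := by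
  by_cases ha : α = 0
  · simp [ha]
  have : ⟪α, α⟫ ≠ 0 := fun h' => ha (inner_self_eq_zero.mp h')
  rw [coroot_inner] at h
  rcases mul_eq_zero.mp h with h | h
  · exact absurd h (by positivity)
  · exact h

lemma inner_coroot_self {α : V} (ha : α ≠ 0) : ⟪α, coroot α⟫ = 2 := by
  have : ⟪α, α⟫ ≠ 0 := fun h' => ha (inner_self_eq_zero.mp h')
  rw [coroot_inner]; field_simp

lemma reflV_self (α : V) : reflV α α = -α := by
  rw [reflV_apply']
  by_cases ha : α = 0
  · simp [ha]
  rw [inner_coroot_self ha]; module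

lemma reflV_fix {α v : V} (h : ⟪v, α⟫ = 0) : reflV α v = v := by
  rw [reflV_apply', inner_coroot_zero h]; simp

lemma reflV_reflV (α v : V) : reflV α (reflV α v) = v := by
  by_cases ha : α = 0
  · subst ha; simp [reflV_apply']
  rw [reflV_apply' α v, map_sub, map_smul, reflV_self, reflV_apply']
  module

lemma reflV_mul_self (α : V) : reflV α * reflV α = 1 := by
  ext v; simp [reflV_reflV]

lemma reflV_inv (α : V) : (reflV α)⁻¹ = reflV α :=
  inv_eq_of_mul_eq_one_left (reflV_mul_self α)

lemma reflV_inner (α v w : V) : ⟪reflV α v, reflV α w⟫ = ⟪v, w⟫ := by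
  by_cases ha : α = 0
  · subst ha; simp [reflV_apply']
  have : ⟪α, α⟫ ≠ 0 := fun h' => ha (inner_self_eq_zero.mp h')
  simp only [reflV_apply', coroot_inner, inner_sub_left, inner_sub_right, real_inner_smul_left,
    real_inner_smul_right, real_inner_comm w α]
  field_simp
  ring

lemma weyl_inner {A : Set V} {w : V ≃ₗ[ℝ] V} (hw : w ∈ weyl A) :
    ∀ x y, ⟪w x, w y⟫ = ⟪x, y⟫ := by
  unfold weyl at hw
  induction hw using Subgroup.closure_induction with
  | mem w h => obtain ⟨α, -, rfl⟩ := h; exact reflV_inner α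
  | one => simp
  | mul a b _ _ ha hb => intro x y; simp [ha, hb]
  | inv a _ ha =>
    intro x y
    rw [← ha]
    simp [← LinearEquiv.mul_apply]

lemma weyl_inner' {A : Set V} {w : V ≃ₗ[ℝ] V} (hw : w ∈ weyl A) (x y : V) :
    ⟪w x, y⟫ = ⟪x, w⁻¹ y⟫ := by
  rw [← weyl_inner hw x]
  simp [← LinearEquiv.mul_apply]

lemma refl_conj (w : V ≃ₗ[ℝ] V) (hw : ∀ x y, ⟪w x, w y⟫ = ⟪x, y⟫) (α : V) :
    w * reflV α = reflV (w α) * w := by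
  ext v
  simp only [LinearEquiv.mul_apply, reflV_apply', map_sub, map_smul, coroot_inner, hw]

lemma weyl_mem_root (S : RootSys V) {w : V ≃ₗ[ℝ] V} (hw : w ∈ weyl (S.Φ : Set V)) :
    ∀ α ∈ S.Φ, w α ∈ S.Φ := by
  unfold weyl at hw
  induction hw using Subgroup.closure_induction'' with
  | mem w h => obtain ⟨α, hα, rfl⟩ := h; exact fun β hβ => S.refl_mem α hα β hβ
  | inv_mem w h => 
    obtain ⟨α, hα, rfl⟩ := h; rw [reflV_inv]; exact fun β hβ => S.refl_mem α hα β hβ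
  | one => simp
  | mul a b _ _ ha hb => intro x hx; exact ha _ (hb _ hx)

lemma weyl_fix {A : Set V} {w : V ≃ₗ[ℝ] V} (hw : w ∈ weyl A) (x : V)
    (hx : ∀ α ∈ A, ⟪x, α⟫ = 0) : w x = x := by
  unfold weyl at hw
  induction hw using Subgroup.closure_induction with
  | mem w h => obtain ⟨α, hα, rfl⟩ := h; exact reflV_fix (hx α hα)
  | one => simp
  | mul a b _ _ ha hb => simp [ha, hb]
  | inv a _ ha => 
    nth_rewrite 1 [← ha]
    simp [← LinearEquiv.mul_apply]

lemma weyl_sub_mem {A : Set V} {w : V ≃ₗ[ℝ] V} (hw : w ∈ weyl A) :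
    ∀ x, w x - x ∈ Submodule.span ℝ A := by
  unfold weyl at hw
  induction hw using Subgroup.closure_induction with
  | mem w h =>
    obtain ⟨α, hα, rfl⟩ := h
    intro x
    rw [reflV_apply', sub_sub_cancel_left]
    exact neg_mem (Submodule.smul_mem _ _ (Submodule.subset_span hα))
  | one => simp
  | mul a b _ _ ha hb => 
    intro x
    have := add_mem (ha (b x)) (hb x)
    simpa using this
  | inv a _ ha =>
    intro x
    have := neg_mem (ha (a⁻¹ x))
    simpa [← LinearEquiv.mul_apply] using this

lemma weyl_mono {A B : Set V} (h : A ⊆ B) : weyl A ≤ weyl B := by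
  unfold weyl
  apply Subgroup.closure_mono
  rintro w ⟨α, hα, rfl⟩
  exact ⟨α, h hα, rfl⟩

lemma simple_root (S : RootSys V) {α : V} (h : α ∈ S.Δ) : α ∈ S.Φ :=
  S.pos_subset (S.simple_subset h)

lemma neg_root (S : RootSys V) {α : V} (h : α ∈ S.Φ) : -α ∈ S.Φ := by
  rw [← reflV_self]; exact S.refl_mem α h α h

/-- Coordinate functionals. -/
lemma exists_coord (S : RootSys V) : ∃ co : V → (V →ₗ[ℝ] ℝ),
    ∀ δ ∈ S.Δ, ∀ ε ∈ S.Δ, co δ ε = if δ = ε then 1 else 0 := by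
  obtain ⟨b, hb⟩ : ∃ f : V →ₗ[ℝ] ({a : V // a ∈ S.Δ} →₀ ℝ), 
      ∀ i, f i.1 = Finsupp.single i 1 := by
    obtain ⟨f, hf⟩ := LinearMap.exists_leftInverse_of_injective
      (Finsupp.linearCombination ℝ (fun x : {a : V // a ∈ S.Δ} => x.1))
      (LinearMap.ker_eq_bot.mpr S.simple_indep)
    refine ⟨f, fun i => ?_⟩
    have := LinearMap.congr_fun hf (Finsupp.single i 1)
    simpa using this
  refine ⟨fun δ => if h : δ ∈ S.Δ then (Finsupp.lapply ⟨δ, h⟩) ∘ₗ b else 0, ?_⟩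
  intro δ hδ ε hε
  simp only [hδ, dif_pos, LinearMap.comp_apply]
  rw [hb ⟨ε, hε⟩]
  simp [Finsupp.single_apply, eq_comm]

lemma coord_sum (S : RootSys V) {co : V → (V →ₗ[ℝ] ℝ)}
    (hco : ∀ δ ∈ S.Δ, ∀ ε ∈ S.Δ, co δ ε = if δ = ε then 1 else 0) (c : V → ℝ)
    {δ : V} (hδ : δ ∈ S.Δ) : co δ (∑ α ∈ S.Δ, c α • α) = c δ := by
  rw [map_sum, Finset.sum_congr rfl (g := fun α => if δ = α then c α else 0)]
  · simp [hδ]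
  · intro α hα
    rw [map_smul, hco δ hδ α hα]; simp

lemma coord_pos (S : RootSys V) {co : V → (V →ₗ[ℝ] ℝ)}
    (hco : ∀ δ ∈ S.Δ, ∀ ε ∈ S.Δ, co δ ε = if δ = ε then 1 else 0)
    {β : V} (hβ : β ∈ S.pos) : (∀ δ ∈ S.Δ, 0 ≤ co δ β) ∧ β = ∑ δ ∈ S.Δ, co δ β • δ := by
  obtain ⟨c, hc, e⟩ := S.simple_gen β hβ
  have h : ∀ δ ∈ S.Δ, co δ β = c δ := fun δ hδ => by
    rw [e]; exact coord_sum S hco c hδ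
  refine ⟨fun δ hδ => by rw [h δ hδ]; exact hc δ hδ, ?_⟩
  rw [Finset.sum_congr rfl (fun δ hδ => by rw [h δ hδ])]
  exact e

lemma simple_refl_pos (S : RootSys V) {β δ : V} (hβ : β ∈ S.pos) (hδ : δ ∈ S.Δ)
    (hne : β ≠ δ) : reflV δ β ∈ S.pos := by
  obtain ⟨co, hco⟩ := exists_coord S
  by_contra hn
  have hr := S.refl_mem δ (simple_root S hδ) β (S.pos_subset hβ)
  have hneg : -reflV δ β ∈ S.pos := (S.mem_pos_or _ hr).resolve_left hn
  have h1 := coord_pos S hco hβ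
  have h2 := coord_pos S hco hneg
  have h3 : ∀ ε ∈ S.Δ, ε ≠ δ → co ε β = 0 := by
    intro ε hε hεδ
    have a := h1.1 ε hε
    have b := h2.1 ε hε
    rw [reflV_apply', map_neg, map_sub, map_smul, hco ε hε δ hδ, if_neg hεδ] at b
    simp at b
    linarith
  have h4 : β = co δ β • δ := by
    rw [Finset.sum_eq_single_of_mem δ hδ (fun ε hε hne => by rw [h3 ε hε hne, zero_smul])] at h1
    exact h1.2
  have h5 := h1.1 δ hδ
  rcases S.reduced δ (simple_root S hδ) (co δ β) (by rw [← h4]; exact S.pos_subset hβ) with h | h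
  · rw [h, one_smul] at h4; exact hne h4
  · linarith

/-- a vector having inner product `1` with all simple roots -/
lemma exists_rho (S : RootSys V) : ∃ ρ : V, ∀ δ ∈ S.Δ, ⟪ρ, δ⟫ = 1 := by
  obtain ⟨co, hco⟩ := exists_coord S
  refine ⟨(InnerProductSpace.toDual ℝ V).symm
    (LinearMap.toContinuousLinearMap (∑ δ ∈ S.Δ, co δ)), fun δ hδ => ?_⟩
  rw [InnerProductSpace.toDual_symm_apply]
  simp only [LinearMap.coe_toContinuousLinearMap', LinearMap.sum_apply]
  rw [Finset.sum_congr rfl (fun ε hε => hco ε hε δ hδ)]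
  simp [hδ]

/-- induction on height -/
lemma pos_induction (S : RootSys V) (P : V → Prop) (h0 : ∀ δ ∈ S.Δ, P δ)
    (h1 : ∀ β ∈ S.pos, ∀ δ ∈ S.Δ, reflV δ β ∈ S.pos → P (reflV δ β) → P β) :
    ∀ β ∈ S.pos, P β := by
  obtain ⟨ρ, hρ⟩ := exists_rho S
  obtain ⟨co, hco⟩ := exists_coord S
  by_contra! hcon
  obtain ⟨β0, hβ0, hP0⟩ := hcon
  obtain ⟨β, hβ, hmin⟩ := Finset.exists_min_image (S.pos.filter (fun β => ¬ P β))
    (fun β => ⟪ρ, β⟫) ⟨β0, by simp [hβ0, hP0]⟩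
  rw [Finset.mem_filter] at hβ
  obtain ⟨hβ, hPβ⟩ := hβ
  have hc := coord_pos S hco hβ
  have hβne : β ≠ 0 := S.ne_zero β (S.pos_subset hβ)
  obtain ⟨δ, hδ, hpos⟩ : ∃ δ ∈ S.Δ, 0 < ⟪β, δ⟫ := by
    by_contra! hle
    have : ⟪β, β⟫ ≤ 0 := by
      nth_rewrite 2 [hc.2]
      rw [inner_sum]
      apply Finset.sum_nonpos
      intro δ hδ
      rw [real_inner_smul_right]
      exact mul_nonpos_of_nonneg_of_nonpos (hc.1 δ hδ) (hle δ hδ)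
    exact absurd (real_inner_self_pos.mpr hβne) (not_lt.mpr this)
  have hne : β ≠ δ := by rintro rfl; exact hPβ (h0 _ hδ)
  have hr := simple_refl_pos S hβ hδ hne
  apply hPβ
  apply h1 β hβ δ hδ hr
  by_contra hPr
  have := hmin (reflV δ β) (by simp [hr, hPr])
  rw [reflV_apply', inner_sub_right, real_inner_smul_right, hρ δ hδ, coroot_inner] at this
  have hδ0 : 0 < ⟪δ, δ⟫ := real_inner_self_pos.mpr (S.ne_zero δ (simple_root S hδ))
  have : 0 < 2 / ⟪δ, δ⟫ * ⟪β, δ⟫ := by positivity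
  linarith

lemma root_int (S : RootSys V) {β : V} (hβ : β ∈ S.Φ) :
    β ∈ Submodule.span ℤ (S.Δ : Set V) := by
  have key : ∀ β ∈ S.pos, β ∈ Submodule.span ℤ (S.Δ : Set V) := by
    apply pos_induction S
    · intro δ hδ; exact Submodule.subset_span hδ
    · intro β hβ δ hδ _ h
      obtain ⟨n, hn⟩ := S.crystallographic δ (simple_root S hδ) β (S.pos_subset hβ)
      rw [reflV_apply', hn, Int.cast_smul_eq_zsmul] at h
      have := add_mem h (Submodule.smul_mem _ n (Submodule.subset_span (s := (S.Δ : Set V)) hδ))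
      simpa using this
  rcases S.mem_pos_or β hβ with h | h
  · exact key β h
  · simpa using neg_mem (key _ h)

lemma root_real_span (S : RootSys V) {I : Finset V} (hI : I ⊆ S.Δ) {γ : V} (hγ : γ ∈ S.Φ)
    (h : γ ∈ Submodule.span ℝ (PhiI S I)) : γ ∈ PhiI S I := by
  refine ⟨hγ, ?_⟩
  obtain ⟨co, hco⟩ := exists_coord S
  have h1 := root_int S hγ
  rw [Submodule.mem_span_finset] at h1
  obtain ⟨n, -, hn⟩ := h1
  have hn' : γ = ∑ a ∈ S.Δ, (n a : ℝ) • a := by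
    rw [← hn]; exact Finset.sum_congr rfl (fun a _ => by rw [Int.cast_smul_eq_zsmul])
  have hz : ∀ δ ∈ S.Δ, δ ∉ I → n δ = 0 := by
    intro δ hδ hδI
    have hker : Submodule.span ℝ (PhiI S I) ≤ LinearMap.ker (co δ) := by
      rw [Submodule.span_le]
      rintro x ⟨-, hx⟩
      have : Submodule.span ℤ (I : Set V) ≤ (LinearMap.ker (co δ)).restrictScalars ℤ := by
        rw [Submodule.span_le]
        intro y hy
        have hy' : y ∈ I := hy
        simp only [Submodule.coe_restrictScalars, SetLike.mem_coe, LinearMap.mem_ker]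
        rw [hco δ hδ y (hI hy'), if_neg]
        rintro rfl; exact hδI hy'
      exact this hx
    have := hker h
    rw [LinearMap.mem_ker, hn', coord_sum S hco _ hδ] at this
    exact_mod_cast this
  rw [← hn, ← Finset.sum_subset hI (fun x hx hxI => by rw [hz x hx hxI, zero_smul])]
  exact Submodule.sum_mem _ fun x hx => Submodule.smul_mem _ _ (Submodule.subset_span hx)

/-- product of a word of reflections -/
def wordProd (L : List V) : V ≃ₗ[ℝ] V := (L.map reflV).prod

lemma wordProd_mem (S : RootSys V) (L : List V) (hL : ∀ a ∈ L, a ∈ S.Δ) :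
    wordProd L ∈ weyl (S.Φ : Set V) := by
  apply Subgroup.list_prod_mem
  intro x hx
  obtain ⟨a, ha, rfl⟩ := List.mem_map.mp hx
  exact Subgroup.subset_closure ⟨a, simple_root S (hL a ha), rfl⟩

lemma refl_mem_simple (S : RootSys V) {β : V} (hβ : β ∈ S.Φ) :
    reflV β ∈ weyl (S.Δ : Set V) := by
  have key : ∀ β ∈ S.pos, reflV β ∈ weyl (S.Δ : Set V) := by
    apply pos_induction S
    · intro δ hδ; exact Subgroup.subset_closure ⟨δ, hδ, rfl⟩
    · intro β hβ δ hδ _ h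
      have hd : reflV δ ∈ weyl (S.Δ : Set V) := Subgroup.subset_closure ⟨δ, hδ, rfl⟩
      have := refl_conj (reflV δ) (reflV_inner δ) β
      have e : reflV β = reflV δ * (reflV (reflV δ β) * reflV δ) := by
        rw [← this, ← mul_assoc, reflV_mul_self, one_mul]
      rw [e]
      exact mul_mem hd (mul_mem h hd)
  rcases S.mem_pos_or β hβ with h | h
  · exact key β h
  · have := key _ h
    have e : reflV (-β) = reflV β := by
      ext v; simp [reflV_apply', coroot_inner]
    rwa [e] at this

lemma exists_word (S : RootSys V) {w : V ≃ₗ[ℝ] V} (hw : w ∈ weyl (S.Φ : Set V)) :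
    ∃ L : List V, (∀ a ∈ L, a ∈ S.Δ) ∧ w = wordProd L := by
  have hle : weyl (S.Φ : Set V) ≤ weyl (S.Δ : Set V) := by
    conv_lhs => unfold weyl
    rw [Subgroup.closure_le]
    rintro w ⟨α, hα, rfl⟩
    exact refl_mem_simple S hα
  replace hw := hle hw
  clear hle
  unfold weyl at hw
  induction hw using Subgroup.closure_induction'' with
  | mem w h => obtain ⟨α, hα, rfl⟩ := h; exact ⟨[α], by simpa using hα, by simp [wordProd]⟩
  | inv_mem w h =>
    obtain ⟨α, hα, rfl⟩ := h
    exact ⟨[α], by simpa using hα, by simp [wordProd, reflV_inv]⟩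
  | one => exact ⟨[], by simp, by simp [wordProd]⟩
  | mul a b _ _ ha hb =>
    obtain ⟨L1, h1, rfl⟩ := ha
    obtain ⟨L2, h2, rfl⟩ := hb
    refine ⟨L1 ++ L2, ?_, by simp [wordProd]⟩
    intro a ha
    rcases List.mem_append.mp ha with h | h
    · exact h1 a h
    · exact h2 a h

/-- exchange condition -/
lemma exchange (S : RootSys V) {α : V} (hα : α ∈ S.Δ) (L : List V) (hL : ∀ a ∈ L, a ∈ S.Δ)
    (h : -(wordProd L α) ∈ S.pos) :
    ∃ L' : List V, (∀ a ∈ L', a ∈ S.Δ) ∧ L'.length + 1 = L.length ∧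
      wordProd L * reflV α = wordProd L' := by
  induction L with
  | nil =>
    exact absurd h (S.not_both α (S.simple_subset hα))
  | cons δ L ih =>
    have hδ : δ ∈ S.Δ := hL δ (by simp)
    have hL1 : ∀ a ∈ L, a ∈ S.Δ := fun a ha => hL a (by simp [ha])
    have hcons : wordProd (δ :: L) = reflV δ * wordProd L := by simp [wordProd]
    by_cases hn : -(wordProd L α) ∈ S.pos
    · obtain ⟨L', h1, h2, h3⟩ := ih hL1 hn
      refine ⟨δ :: L', ?_, by simp [h2], ?_⟩
      · intro a ha
        rcases List.mem_cons.mp ha with rfl | h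
        · exact hδ
        · exact h1 a h
      · rw [hcons, mul_assoc, h3]; simp [wordProd]
    · have hw := wordProd_mem S L hL1
      have hp := (S.mem_pos_or _ (weyl_mem_root S hw α (simple_root S hα))).resolve_right hn
      have he : wordProd L α = δ := by
        by_contra hne
        have := simple_refl_pos S hp hδ hne
        rw [hcons] at h
        exact S.not_both _ this h
      refine ⟨L, hL1, by simp, ?_⟩
      rw [hcons, mul_assoc, refl_conj _ (weyl_inner hw), he, ← mul_assoc, reflV_mul_self, one_mul]

lemma dom_pos (S : RootSys V) {φ : V →ₗ[ℝ] ℝ} (hφ : ∀ δ ∈ S.Δ, 0 ≤ φ δ) {β : V}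
    (hβ : β ∈ S.pos) : 0 ≤ φ β := by
  obtain ⟨c, hc, e⟩ := S.simple_gen β hβ
  rw [e, map_sum]
  exact Finset.sum_nonneg fun α hα => by
    rw [map_smul]; exact mul_nonneg (hc α hα) (hφ α hα)

/-- stabilizers of dominant functionals -/
lemma stab_word (S : RootSys V) {φ : V →ₗ[ℝ] ℝ} (hφ : ∀ δ ∈ S.Δ, 0 ≤ φ δ) (x : V)
    (hx : ∀ α ∈ S.Φ, φ α = 0 → ⟪x, α⟫ = 0) (n : ℕ) :
    ∀ L : List V, L.length = n → (∀ a ∈ L, a ∈ S.Δ) → (∀ v, φ (wordProd L v) = φ v) →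
      wordProd L x = x := by
  induction n using Nat.strong_induction_on with
  | _ n ih =>
    intro L hlen hL hfix
    rcases List.eq_nil_or_concat L with rfl | ⟨L1, α, rfl⟩
    · simp [wordProd]
    rw [List.concat_eq_append] at *
    have hα : α ∈ S.Δ := hL α (by simp)
    have hL1 : ∀ a ∈ L1, a ∈ S.Δ := fun a ha => hL a (by simp [ha])
    have hsplit : wordProd (L1 ++ [α]) = wordProd L1 * reflV α := by simp [wordProd]
    have hl : L1.length + 1 = n := by simpa using hlen
    rw [hsplit] at hfix ⊢
    by_cases h0 : φ α = 0
    · rw [LinearEquiv.mul_apply, reflV_fix (hx α (simple_root S hα) h0)]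
      apply ih L1.length (by omega) L1 rfl hL1
      intro v
      have := hfix (reflV α v)
      rw [LinearEquiv.mul_apply, reflV_reflV] at this
      rw [this, reflV_apply', map_sub, map_smul, h0]; simp
    · have hpos : 0 < φ α := lt_of_le_of_ne (hφ α hα) (Ne.symm h0)
      have hw := wordProd_mem S L1 hL1
      have hneg : -(wordProd L1 α) ∈ S.pos := by
        have h1 := hfix α
        rw [LinearEquiv.mul_apply, reflV_self, map_neg] at h1
        refine (S.mem_pos_or _ (weyl_mem_root S hw α (simple_root S hα))).resolve_left ?_
        intro hp
        have := dom_pos S hφ hp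
        rw [map_neg] at h1
        linarith
      obtain ⟨L', h1, h2, h3⟩ := exchange S hα L1 hL1 hneg
      rw [h3] at hfix ⊢
      exact ih L'.length (by omega) L' rfl h1 hfix

lemma weyl_finite (S : RootSys V) : Finite (weyl (S.Φ : Set V)) := by
  let f : weyl (S.Φ : Set V) → (S.Φ → S.Φ) := fun w α => ⟨w.1 α.1, weyl_mem_root S w.2 α.1 α.2⟩
  apply Finite.of_injective f
  intro w w' h
  apply Subtype.ext
  apply LinearEquiv.toLinearMap_injective
  apply LinearMap.ext_on (s := (S.Φ : Set V)) S.span_eq_top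
  intro α hα
  have := congrFun h ⟨α, hα⟩
  exact congrArg Subtype.val this

lemma exists_dom (S : RootSys V) (φ : V →ₗ[ℝ] ℝ) :
    ∃ g ∈ weyl (S.Φ : Set V), ∀ δ ∈ S.Δ, 0 ≤ φ (g δ) := by
  obtain ⟨ρ, hρ⟩ := exists_rho S
  haveI := weyl_finite S
  obtain ⟨g, hg⟩ := Finite.exists_max (fun g : weyl (S.Φ : Set V) => φ (g.1 ρ))
  refine ⟨g.1, g.2, fun δ hδ => ?_⟩
  have hs : reflV δ ∈ weyl (S.Φ : Set V) :=
    Subgroup.subset_closure ⟨δ, simple_root S hδ, rfl⟩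
  have := hg ⟨g.1 * reflV δ, mul_mem g.2 hs⟩
  simp only [LinearEquiv.mul_apply] at this
  rw [reflV_apply', map_sub, map_sub, map_smul, map_smul, coroot_inner, hρ δ hδ, smul_eq_mul] at this
  have hδ0 : 0 < ⟪δ, δ⟫ := real_inner_self_pos.mpr (S.ne_zero δ (simple_root S hδ))
  have h2 : 0 < 2 / ⟪δ, δ⟫ * 1 := by positivity
  by_contra! hlt
  have := mul_neg_of_pos_of_neg h2 hlt
  linarith

lemma stab_real (S : RootSys V) (φ : V →ₗ[ℝ] ℝ) (x : V)
    (hx : ∀ α ∈ S.Φ, φ α = 0 → ⟪x, α⟫ = 0) {u : V ≃ₗ[ℝ] V} (hu : u ∈ weyl (S.Φ : Set V))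
    (hfix : ∀ v, φ (u v) = φ v) : u x = x := by
  obtain ⟨g, hg, hdom⟩ := exists_dom S φ
  obtain ⟨L, hL, e⟩ := exists_word S (mul_mem (mul_mem (inv_mem hg) hu) hg)
  have := stab_word S (φ := φ ∘ₗ (g : V →ₗ[ℝ] V)) hdom (g⁻¹ x) (by
    intro α hα h0
    rw [weyl_inner' (inv_mem hg), inv_inv]
    exact hx _ (weyl_mem_root S hg α hα) h0) L.length L rfl hL (by
    intro v
    rw [← e]
    have h1 : g ((g⁻¹ * u * g) v) = u (g v) := by
      rw [← LinearEquiv.mul_apply, ← LinearEquiv.mul_apply]; congr 1; group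
    simp only [LinearMap.comp_apply, LinearEquiv.coe_coe, h1, hfix])
  rw [← e] at this
  have h2 : (g⁻¹ * u * g) (g⁻¹ x) = g⁻¹ (u x) := by
    simp only [← LinearEquiv.mul_apply]; congr 1; group
  rw [h2] at this
  exact (g⁻¹).injective this

lemma stab_complex (S : RootSys V) (l : HStar V) (x : V)
    (hx : ∀ α ∈ singSet S l, ⟪x, α⟫ = 0) {u : V ≃ₗ[ℝ] V} (hu : u ∈ weyl (S.Φ : Set V))
    (hfix : ∀ v, l (u v) = l v) : u x = x := by
  obtain ⟨t, ht⟩ := Infinite.exists_notMem_finset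
    (S.Φ.image (fun α => -(l α).re / (l α).im))
  refine stab_real S (Complex.reLm ∘ₗ l + t • (Complex.imLm ∘ₗ l)) x ?_ hu ?_
  · intro α hα h0
    apply hx
    refine ⟨hα, ?_⟩
    have h0 : (l α).re + t * (l α).im = 0 := by simpa using h0
    by_cases him : (l α).im = 0
    · apply Complex.ext
      · rw [him] at h0; simpa using h0
      · simpa using him
    · exfalso
      apply ht
      rw [Finset.mem_image]
      refine ⟨α, hα, ?_⟩
      field_simp
      linarith
  · intro v
    simp [hfix]

lemma mem_rat (S : RootSys V) {A : Set V} (hA : A ⊆ (S.Φ : Set V)) {γ : V} (hγ : γ ∈ S.Φ)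
    (h : ∀ x, (∀ α ∈ A, ⟪x, α⟫ = 0) → ⟪x, γ⟫ = 0) : γ ∈ ratSpanRoots S A := by
  refine ⟨hγ, ?_⟩
  have hspan : γ ∈ Submodule.span ℝ A := by
    rw [← Submodule.orthogonal_orthogonal (Submodule.span ℝ A), Submodule.mem_orthogonal]
    intro x hx
    apply h
    intro α hα
    rw [real_inner_comm]
    exact (Submodule.mem_orthogonal _ _).mp hx α (Submodule.subset_span hα)
  obtain ⟨b, hbA, hbs, hbi⟩ := exists_linearIndependent ℝ A
  have hbfin : b.Finite := S.Φ.finite_toSet.subset (hbA.trans hA)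
  haveI : Fintype b := hbfin.fintype
  have hcr : ∀ α : V, α ∈ S.Φ → ∀ i : b, ∃ n : ℤ, ⟪α, coroot i.1⟫ = (n : ℝ) :=
    fun α hα i => S.crystallographic i.1 (hA (hbA i.2)) α hα
  choose! N hN using hcr
  have hbΦ : ∀ i : b, i.1 ∈ S.Φ := fun i => hA (hbA i.2)
  -- vectors in the span orthogonal to all of `b` vanish
  have hzero : ∀ v ∈ Submodule.span ℝ A, (∀ i : b, ⟪v, coroot i.1⟫ = 0) → v = 0 := by
    intro v hv hvi
    rw [← hbs] at hv
    have : Submodule.span ℝ b ≤ LinearMap.ker (innerₗ V v) := by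
      rw [Submodule.span_le]
      intro y hy
      exact inner_zero_of_coroot (hvi ⟨y, hy⟩)
    exact inner_self_eq_zero.mp (this hv)
  let T : (b → ℚ) →ₗ[ℚ] (b → ℚ) :=
    { toFun := fun x j => ∑ i, x i * (N i.1 j : ℚ)
      map_add' := by intro x y; ext j; simp [add_mul, Finset.sum_add_distrib]
      map_smul' := by intro c x; ext j; simp [Finset.mul_sum, mul_assoc] }
  have hT : ∀ x j, ⟪∑ i : b, ((x i : ℚ) : ℝ) • i.1, coroot j.1⟫ = ((T x j : ℚ) : ℝ) := by
    intro x j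
    rw [sum_inner]
    simp only [T, LinearMap.coe_mk, AddHom.coe_mk, Rat.cast_sum, Rat.cast_mul, Rat.cast_intCast]
    exact Finset.sum_congr rfl fun i _ => by rw [real_inner_smul_left, hN i.1 (hbΦ i) j]
  have hmem : ∀ x : b → ℚ, ∑ i : b, ((x i : ℚ) : ℝ) • i.1 ∈ Submodule.span ℝ A := fun x =>
    Submodule.sum_mem _ fun i _ => Submodule.smul_mem _ _ (Submodule.subset_span (hbA i.2))
  have hinj : Function.Injective T := by
    rw [← LinearMap.ker_eq_bot, LinearMap.ker_eq_bot']
    intro x hx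
    have h0 := hzero _ (hmem x) (fun j => by rw [hT, hx]; simp)
    have := Fintype.linearIndependent_iff.mp hbi (fun i => ((x i : ℚ) : ℝ)) h0
    ext i
    exact_mod_cast this i
  obtain ⟨x, hx⟩ := LinearMap.injective_iff_surjective.mp hinj (fun j => (N γ j : ℚ))
  have hfin : γ - ∑ i : b, ((x i : ℚ) : ℝ) • i.1 = 0 := by
    apply hzero _ (sub_mem hspan (hmem x))
    intro j
    rw [inner_sub_left, hT, hx, hN γ hγ j]; simp
  refine ⟨hbfin.toFinset, fun v => if hv : v ∈ b then x ⟨v, hv⟩ else 0, by simpa using hbA, ?_⟩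
  rw [sub_eq_zero.mp hfin]
  rw [← Finset.sum_coe_sort hbfin.toFinset]
  refine Fintype.sum_equiv (Equiv.subtypeEquivRight (by simp)) _ _ ?_
  intro i
  simp

lemma sRefl_apply (β : V) (l : HStar V) (v : V) : sRefl β l v = l (reflV β v) := by
  rw [reflV_apply', map_sub, map_smul]
  simp only [sRefl, emb, LinearMap.sub_apply, LinearMap.smul_apply, LinearMap.coe_mk,
    AddHom.coe_mk, coroot, map_smul, real_inner_smul_right, smul_eq_mul, Complex.real_smul,
    real_inner_comm β v]
  push_cast
  ring

/-- Lemma 4.14: let `λ ∈ Λ_I⁺` and `β, γ ∈ Ψ_λ⁺` with `sgn(s_β λ, s_γ λ) ≠ 0`.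
Then `γ ∈ Φ_{β,1}` and `γ ∈ Φ_{β,2}`. -/
theorem statement_13 {V : Type*} [NormedAddCommGroup V] [InnerProductSpace ℝ V]
    [FiniteDimensional ℝ V]
    (S : RootSys V) (I : Finset V) (hI : I ⊆ S.Δ)
    (lam : HStar V) (hlam : lam ∈ LambdaP (I : Set V))
    (β γ : V) (hβ : β ∈ PsiP S (PhiI S I) (S.Φ : Set V) lam)
    (hγ : γ ∈ PsiP S (PhiI S I) (S.Φ : Set V) lam)
    (h : sgnW S (PhiI S I) (sRefl β lam) (sRefl γ lam) ≠ 0) :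
    γ ∈ ratSpanRoots S (PhiI S I ∪ {β}) ∧ γ ∈ ratSpanRoots S (singSet S lam ∪ {β}) := by
  obtain ⟨⟨hβΦ, -⟩, -, -⟩ := hβ
  obtain ⟨⟨hγΦ, -⟩, hγI, n, hn, hn'⟩ := hγ
  have hγΦ' : γ ∈ S.Φ := hγΦ
  have hPI : PhiI S I ⊆ (S.Φ : Set V) := fun _ hx => hx.1
  have hex : ∃ w, w ∈ weyl (PhiI S I) ∧ sRefl γ lam = wAct w (sRefl β lam) := by
    unfold sgnW at h
    split_ifs at h with hc
    · exact hc.2.2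
    · exact absurd rfl h
  obtain ⟨w, hw, e⟩ := hex
  have hwΦ := weyl_mono hPI hw
  have e' : ∀ v, lam (reflV γ v) = lam (reflV β (w⁻¹ v)) := by
    intro v
    have := LinearMap.congr_fun e v
    rw [sRefl_apply] at this
    rw [this]
    exact sRefl_apply β lam _
  have hγ0 := S.ne_zero γ hγΦ'
  constructor
  · apply mem_rat S _ hγΦ'
    · intro x hx
      have h1 : w⁻¹ x = x := weyl_fix (inv_mem hw) x fun α hα => hx α (Or.inl hα)
      have h2 := e' x
      rw [h1, reflV_fix (hx β (Or.inr rfl)), reflV_apply', map_sub, sub_eq_self, map_smul,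
        smul_eq_zero] at h2
      rcases h2 with h2 | h2
      · exact inner_zero_of_coroot h2
      · exfalso
        rw [coroot, map_smul, h2, smul_zero] at hn'
        have : n = 0 := by exact_mod_cast hn'.symm
        omega
    · rintro x (hx | rfl)
      · exact hPI hx
      · exact hβΦ
  · apply mem_rat S _ hγΦ'
    · intro x hx
      have hsβ : reflV β ∈ weyl (S.Φ : Set V) := Subgroup.subset_closure ⟨β, hβΦ, rfl⟩
      have hsγ : reflV γ ∈ weyl (S.Φ : Set V) := Subgroup.subset_closure ⟨γ, hγΦ, rfl⟩
      have hu : reflV β * w⁻¹ * reflV γ ∈ weyl (S.Φ : Set V) :=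
        mul_mem (mul_mem hsβ (inv_mem hwΦ)) hsγ
      have h1 := stab_complex S lam x (fun α hα => hx α (Or.inl hα)) hu (by
        intro v
        have := e' (reflV γ v)
        rw [reflV_reflV] at this
        exact this.symm)
      have h2 : w⁻¹ (reflV γ x) = x := by
        have := congrArg (reflV β) h1
        rw [reflV_fix (hx β (Or.inr rfl))] at this
        simpa only [LinearEquiv.mul_apply, reflV_reflV] using this
      have h3 := weyl_sub_mem (inv_mem hw) (reflV γ x)
      rw [h2, reflV_apply', sub_sub_cancel] at h3
      by_contra hne
      have hc : ⟪x, coroot γ⟫ ≠ 0 := fun h0 => hne (inner_zero_of_coroot h0)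
      exact hγI (root_real_span S hI hγΦ' ((Submodule.smul_mem_iff _ hc).mp h3))
    · rintro x (hx | rfl)
      · exact hx.1
      · exact hβΦ

end JantzenGVM
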